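/- arXiv:2502.04646 — 2 statements merged into one kernel-verified Lean document; each statement's English description precedes it below -/
import Mathlib

section
/- (Log-gap bound for quadratic weights.) Fix x ∈ ℝ^d with ∫ ‖y‖² π_x(y) dy < ∞. Suppose l(y) ≥ m for all y with m > 0, l(x̄₀(x)) ≥ m, and that for all y ∈ ℝ^d, l(y) = l(x̄₀(x)) + cᵀ(y − x̄₀(x)) + ½ (y − x̄₀(x))ᵀ H (y − x̄₀(x)) for some c ∈ ℝ^d and some symmetric matrix H with ‖H‖ ≤ η₂. Then |log h(x) − log l(x̄₀(x))| ≤ (η₂/(2m)) · ∫ ‖y − x̄₀(x)‖² π_x(y) dy. -/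
open MeasureTheory Real

noncomputable section

/-- Gaussian transition kernel `G(x,y) = (2π(1−ᾱ))^(−d/2) exp(−‖x−√ᾱ y‖²/(2(1−ᾱ)))`. -/
def G (d : ℕ) (α : ℝ) (x y : EuclideanSpace ℝ (Fin d)) : ℝ :=
  (2 * π * (1 - α)) ^ (-(d : ℝ) / 2) * exp (-‖x - Real.sqrt α • y‖ ^ 2 / (2 * (1 - α)))

/-- Noise-perturbed density `p_t(x) = ∫ G(x,y) p₀(y) dy`. -/
def pt (d : ℕ) (α : ℝ) (p₀ : EuclideanSpace ℝ (Fin d) → ℝ)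
    (x : EuclideanSpace ℝ (Fin d)) : ℝ :=
  ∫ y, G d α x y * p₀ y

/-- Posterior density `π_x(y) = G(x,y) p₀(y) / p_t(x)`. -/
def post (d : ℕ) (α : ℝ) (p₀ : EuclideanSpace ℝ (Fin d) → ℝ)
    (x y : EuclideanSpace ℝ (Fin d)) : ℝ :=
  G d α x y * p₀ y / pt d α p₀ x

/-- Posterior weight average `h(x) = ∫ l(y) π_x(y) dy`. -/
def hAvg (d : ℕ) (α : ℝ) (p₀ l : EuclideanSpace ℝ (Fin d) → ℝ)
    (x : EuclideanSpace ℝ (Fin d)) : ℝ :=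
  ∫ y, l y * post d α p₀ x y

/-- Noise-perturbed importance-sampling density
`q_t(x) = ∫ G(x,y) q₀(y) dy` with `q₀(y) = l(y) p₀(y) / Z₀`. -/
def qt (d : ℕ) (α : ℝ) (p₀ l : EuclideanSpace ℝ (Fin d) → ℝ) (Z₀ : ℝ)
    (x : EuclideanSpace ℝ (Fin d)) : ℝ :=
  ∫ y, G d α x y * (l y * p₀ y / Z₀)


/-- Posterior mean `x̄₀(x) = ∫ y π_x(y) dy`. -/
def postMean (d : ℕ) (α : ℝ) (p₀ : EuclideanSpace ℝ (Fin d) → ℝ)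
    (x : EuclideanSpace ℝ (Fin d)) : EuclideanSpace ℝ (Fin d) :=
  ∫ y, post d α p₀ x y • y

/-!
Write `Y` for a random vector with mean `a`. If `l` is within `η/2 ‖y - a‖²` of an affine function
through `(a, l a)`, the linear part averages to zero, so `E[l(Y)]` differs from `l a` by at most
`η/2 E‖Y - a‖²`. Both numbers are at least `m`, where `log` is `1/m`-Lipschitz. For the theorem,
`Y` is distributed according to the posterior, and the remainder of the affine approximation is
half the quadratic form of `H`.
-/

theorem abs_log_sub_log_le_div {m a b : ℝ} (hm : 0 < m) (ha : m ≤ a) (hb : m ≤ b) :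
    |log a - log b| ≤ |a - b| / m := by
  wlog hba : b ≤ a generalizing a b
  · rw [abs_sub_comm (log a), abs_sub_comm a]
    exact this hb ha (le_of_not_ge hba)
  have ha0 : 0 < a := hm.trans_le ha
  have hb0 : 0 < b := hm.trans_le hb
  rw [abs_of_nonneg (sub_nonneg.2 (log_le_log hb0 hba)), abs_of_nonneg (sub_nonneg.2 hba)]
  calc log a - log b = log (a / b) := (log_div ha0.ne' hb0.ne').symm
    _ ≤ a / b - 1 := log_le_sub_one_of_pos (div_pos ha0 hb0)
    _ = (a - b) / b := by rw [sub_div, div_self hb0.ne']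
    _ ≤ (a - b) / m := div_le_div_of_nonneg_left (sub_nonneg.2 hba) hm hb

section SecondOrderRemainder

variable {Ω E : Type*} [MeasurableSpace Ω] {P : Measure Ω} [NormedAddCommGroup E]
  [NormedSpace ℝ E] {Y : Ω → E}

theorem integral_clm_sub_integral_eq_zero [IsProbabilityMeasure P] [CompleteSpace E]
    {F : Type*} [NormedAddCommGroup F] [NormedSpace ℝ F] [CompleteSpace F] (hY : Integrable Y P)
    (L : E →L[ℝ] F) : ∫ ω, L (Y ω - ∫ ω', Y ω' ∂P) ∂P = 0 := by
  have hcentered : ∫ ω, (Y ω - ∫ ω', Y ω' ∂P) ∂P = 0 := by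
    rw [integral_sub hY (integrable_const _), integral_const, probReal_univ, one_smul, sub_self]
  have hint : Integrable (fun ω => Y ω - ∫ ω', Y ω' ∂P) P := hY.sub (integrable_const _)
  rw [L.integral_comp_comm hint, hcentered, map_zero]

variable {l : E → ℝ} {a : E} {L : E →L[ℝ] ℝ} {C η : ℝ}

theorem integrable_comp_of_abs_sub_affine_le [IsFiniteMeasure P] (hY : MemLp Y 2 P)
    (hl : AEStronglyMeasurable (fun ω => l (Y ω)) P)
    (hrem : ∀ᵐ ω ∂P, |l (Y ω) - (l a + L (Y ω - a))| ≤ C * ‖Y ω - a‖ ^ 2) :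
    Integrable (fun ω => l (Y ω)) P := by
  have hsub : MemLp (fun ω => Y ω - a) 2 P := hY.sub (memLp_const a)
  have haff : Integrable (fun ω => l a + L (Y ω - a)) P :=
    (integrable_const _).add (L.integrable_comp (hsub.integrable one_le_two))
  have hdiff : Integrable (fun ω => l (Y ω) - (l a + L (Y ω - a))) P :=
    ((hsub.integrable_norm_pow two_ne_zero).const_mul C).mono'
      (hl.sub haff.aestronglyMeasurable) hrem
  simpa only [Pi.add_def, sub_add_cancel] using hdiff.add haff

variable [IsProbabilityMeasure P] [CompleteSpace E]

theorem abs_integral_comp_sub_apply_integral_le (hY : MemLp Y 2 P)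
    (hl : AEStronglyMeasurable (fun ω => l (Y ω)) P) (ha : a = ∫ ω, Y ω ∂P)
    (hrem : ∀ᵐ ω ∂P, |l (Y ω) - (l a + L (Y ω - a))| ≤ C * ‖Y ω - a‖ ^ 2) :
    |∫ ω, l (Y ω) ∂P - l a| ≤ C * ∫ ω, ‖Y ω - a‖ ^ 2 ∂P := by
  have hsub : MemLp (fun ω => Y ω - a) 2 P := hY.sub (memLp_const a)
  have hlin : Integrable (fun ω => L (Y ω - a)) P :=
    L.integrable_comp (hsub.integrable one_le_two)
  have hlin_zero : ∫ ω, L (Y ω - a) ∂P = 0 :=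
    ha ▸ integral_clm_sub_integral_eq_zero (hY.integrable one_le_two) L
  have haff : Integrable (fun ω => l a + L (Y ω - a)) P := (integrable_const _).add hlin
  have hdiff : ∫ ω, (l (Y ω) - (l a + L (Y ω - a))) ∂P = ∫ ω, l (Y ω) ∂P - l a := by
    rw [integral_sub (integrable_comp_of_abs_sub_affine_le hY hl hrem) haff,
      integral_add (integrable_const _) hlin, hlin_zero, integral_const, probReal_univ, one_smul,
      add_zero]
  rw [← hdiff, ← integral_const_mul, ← norm_eq_abs]
  exact norm_integral_le_of_norm_le
    ((hsub.integrable_norm_pow two_ne_zero).const_mul C) hrem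

theorem stmt9_general {m : ℝ} (hm : 0 < m) (hY : MemLp Y 2 P)
    (hl : AEStronglyMeasurable (fun ω => l (Y ω)) P) (ha : a = ∫ ω, Y ω ∂P)
    (hlY : ∀ᵐ ω ∂P, m ≤ l (Y ω)) (hla : m ≤ l a)
    (hrem : ∀ᵐ ω ∂P, |l (Y ω) - (l a + L (Y ω - a))| ≤ η / 2 * ‖Y ω - a‖ ^ 2) :
    |log (∫ ω, l (Y ω) ∂P) - log (l a)| ≤ η / (2 * m) * ∫ ω, ‖Y ω - a‖ ^ 2 ∂P := by
  have hmean : m ≤ ∫ ω, l (Y ω) ∂P := by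
    simpa only [integral_const, probReal_univ, one_smul] using
      integral_mono_ae (integrable_const m) (integrable_comp_of_abs_sub_affine_le hY hl hrem) hlY
  calc |log (∫ ω, l (Y ω) ∂P) - log (l a)|
      ≤ |∫ ω, l (Y ω) ∂P - l a| / m := abs_log_sub_log_le_div hm hmean hla
    _ ≤ (η / 2 * ∫ ω, ‖Y ω - a‖ ^ 2 ∂P) / m := by
      gcongr
      exact abs_integral_comp_sub_apply_integral_le hY hl ha hrem
    _ = η / (2 * m) * ∫ ω, ‖Y ω - a‖ ^ 2 ∂P := by rw [mul_div_right_comm, div_div]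

end SecondOrderRemainder

section QuadraticFunction

variable {E : Type*} [NormedAddCommGroup E] [InnerProductSpace ℝ E] {H : E →L[ℝ] E} {η : ℝ}

theorem abs_inner_clm_apply_self_le (hH : ‖H‖ ≤ η) (v : E) : |inner ℝ v (H v)| ≤ η * ‖v‖ ^ 2 :=
  calc |inner ℝ v (H v)| ≤ ‖v‖ * ‖H v‖ := abs_real_inner_le_norm v (H v)
    _ ≤ ‖v‖ * (η * ‖v‖) := by gcongr; exact H.le_of_opNorm_le hH v
    _ = η * ‖v‖ ^ 2 := by ring

theorem abs_sub_affine_le_of_eq_quadratic {l : E → ℝ} {a c y : E} (hH : ‖H‖ ≤ η)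
    (hquad : l y = l a + inner ℝ c (y - a) + (1 / 2) * inner ℝ (y - a) (H (y - a))) :
    |l y - (l a + innerSL ℝ c (y - a))| ≤ η / 2 * ‖y - a‖ ^ 2 := by
  rw [hquad, innerSL_apply_apply, add_sub_cancel_left, abs_mul, abs_of_pos one_half_pos]
  linarith [abs_inner_clm_apply_self_le hH (y - a)]

end QuadraticFunction

section DensityOfReal

variable {X : Type*} [MeasurableSpace X] {μ : Measure X} {w : X → ℝ}

theorem isProbabilityMeasure_withDensity_ofReal (hw0 : 0 ≤ᵐ[μ] w) (hw1 : ∫ y, w y ∂μ = 1) :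
    IsProbabilityMeasure (μ.withDensity fun y => ENNReal.ofReal (w y)) := by
  have hw : Integrable w μ := .of_integral_ne_zero (hw1 ▸ one_ne_zero)
  refine ⟨?_⟩
  rw [withDensity_apply _ MeasurableSet.univ, Measure.restrict_univ,
    ← ofReal_integral_eq_lintegral_ofReal hw hw0, hw1, ENNReal.ofReal_one]

variable {F : Type*} [NormedAddCommGroup F] [NormedSpace ℝ F]

theorem integral_withDensity_ofReal (hw : AEMeasurable w μ) (hw0 : 0 ≤ᵐ[μ] w) (g : X → F) :
    ∫ y, g y ∂(μ.withDensity fun y => ENNReal.ofReal (w y)) = ∫ y, w y • g y ∂μ := by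
  rw [integral_withDensity_eq_integral_toReal_smul₀ hw.ennreal_ofReal
    (.of_forall fun _ => ENNReal.ofReal_lt_top)]
  refine integral_congr_ae (hw0.mono fun y hy => ?_)
  simp only [ENNReal.toReal_ofReal hy]

theorem integrable_withDensity_ofReal_iff (hw : AEMeasurable w μ) (hw0 : 0 ≤ᵐ[μ] w) {g : X → F} :
    Integrable g (μ.withDensity fun y => ENNReal.ofReal (w y)) ↔
      Integrable (fun y => w y • g y) μ := by
  rw [integrable_withDensity_iff_integrable_smul₀' hw.ennreal_ofReal
    (.of_forall fun _ => ENNReal.ofReal_lt_top)]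
  refine integrable_congr (hw0.mono fun y hy => ?_)
  simp only [ENNReal.toReal_ofReal hy]

end DensityOfReal

section Posterior

variable {d : ℕ} {α : ℝ} {p₀ : EuclideanSpace ℝ (Fin d) → ℝ} {x : EuclideanSpace ℝ (Fin d)}

theorem G_nonneg (hα : α ≤ 1) (x y : EuclideanSpace ℝ (Fin d)) : 0 ≤ G d α x y := by
  have hvar : 0 ≤ 2 * π * (1 - α) := mul_nonneg two_pi_pos.le (sub_nonneg.2 hα)
  exact mul_nonneg (rpow_nonneg hvar _) (exp_pos _).le

theorem post_nonneg (hα : α ≤ 1) (hp₀ : ∀ y, 0 ≤ p₀ y) (x y : EuclideanSpace ℝ (Fin d)) :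
    0 ≤ post d α p₀ x y :=
  have hjoint (z) : 0 ≤ G d α x z * p₀ z := mul_nonneg (G_nonneg hα x z) (hp₀ z)
  div_nonneg (hjoint y) (integral_nonneg hjoint)

theorem integral_post (hpt : pt d α p₀ x ≠ 0) : ∫ y, post d α p₀ x y = 1 :=
  (integral_div _ _).trans (div_self hpt)

theorem integrable_post (hpt : pt d α p₀ x ≠ 0) : Integrable (post d α p₀ x) :=
  .of_integral_ne_zero (integral_post hpt ▸ one_ne_zero)

/-- The posterior distribution `π_x(y) dy` of the clean sample given the noisy observation `x`, as
a measure; it lets posterior averages be treated as expectations. `ENNReal.ofReal` truncates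
negative values of the density to zero. -/
def postMeasure (d : ℕ) (α : ℝ) (p₀ : EuclideanSpace ℝ (Fin d) → ℝ)
    (x : EuclideanSpace ℝ (Fin d)) : Measure (EuclideanSpace ℝ (Fin d)) :=
  volume.withDensity fun y => ENNReal.ofReal (post d α p₀ x y)

theorem isProbabilityMeasure_postMeasure (hα : α ≤ 1) (hp₀ : ∀ y, 0 ≤ p₀ y)
    (hpt : pt d α p₀ x ≠ 0) : IsProbabilityMeasure (postMeasure d α p₀ x) :=
  isProbabilityMeasure_withDensity_ofReal (.of_forall (post_nonneg hα hp₀ x))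
    (integral_post hpt)

theorem integral_postMeasure {F : Type*} [NormedAddCommGroup F] [NormedSpace ℝ F] (hα : α ≤ 1)
    (hp₀ : ∀ y, 0 ≤ p₀ y) (hpt : pt d α p₀ x ≠ 0) (g : EuclideanSpace ℝ (Fin d) → F) :
    ∫ y, g y ∂postMeasure d α p₀ x = ∫ y, post d α p₀ x y • g y :=
  integral_withDensity_ofReal (integrable_post hpt).aemeasurable
    (.of_forall (post_nonneg hα hp₀ x)) g

theorem integral_mul_post (hα : α ≤ 1) (hp₀ : ∀ y, 0 ≤ p₀ y) (hpt : pt d α p₀ x ≠ 0)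
    (g : EuclideanSpace ℝ (Fin d) → ℝ) :
    ∫ y, g y * post d α p₀ x y = ∫ y, g y ∂postMeasure d α p₀ x := by
  simp only [integral_postMeasure hα hp₀ hpt, smul_eq_mul, mul_comm]

theorem postMean_eq_integral_postMeasure (hα : α ≤ 1) (hp₀ : ∀ y, 0 ≤ p₀ y)
    (hpt : pt d α p₀ x ≠ 0) : postMean d α p₀ x = ∫ y, y ∂postMeasure d α p₀ x :=
  (integral_postMeasure hα hp₀ hpt fun y => y).symm

theorem memLp_two_postMeasure (hα : α ≤ 1) (hp₀ : ∀ y, 0 ≤ p₀ y) (hpt : pt d α p₀ x ≠ 0)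
    (hmom : Integrable fun y => post d α p₀ x y * ‖y‖ ^ 2) :
    MemLp (fun y => y) 2 (postMeasure d α p₀ x) :=
  (memLp_two_iff_integrable_sq_norm aestronglyMeasurable_id).2 <|
    (integrable_withDensity_ofReal_iff (integrable_post hpt).aemeasurable
      (.of_forall (post_nonneg hα hp₀ x))).2 hmom

end Posterior

open RealInnerProductSpace in
theorem stmt9 (d : ℕ) (hd : 1 ≤ d) (α : ℝ) (hα0 : 0 < α) (hα1 : α < 1)
    (p₀ l : EuclideanSpace ℝ (Fin d) → ℝ) (m : ℝ) (hm : 0 < m)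
    (hp₀pos : ∀ y, 0 < p₀ y) (hp₀int : Integrable p₀) (hp₀one : (∫ y, p₀ y) = 1)
    (hptpos : ∀ x, 0 < pt d α p₀ x)
    (hlmeas : Measurable l) (hlm : ∀ y, m ≤ l y)
    (x : EuclideanSpace ℝ (Fin d))
    (hGint : Integrable fun y => G d α x y * p₀ y)
    (hmom : Integrable fun y => post d α p₀ x y • y)
    (hmom2 : Integrable fun y => post d α p₀ x y * ‖y‖ ^ 2)
    (hlxbar : m ≤ l (postMean d α p₀ x))
    (η₂ : ℝ) (c : EuclideanSpace ℝ (Fin d))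
    (H : EuclideanSpace ℝ (Fin d) →L[ℝ] EuclideanSpace ℝ (Fin d))
    (hsym : ∀ u v, ⟪H u, v⟫ = ⟪u, H v⟫) (hHnorm : ‖H‖ ≤ η₂)
    (hquad : ∀ y, l y = l (postMean d α p₀ x) + ⟪c, y - postMean d α p₀ x⟫
      + (1 / 2) * ⟪y - postMean d α p₀ x, H (y - postMean d α p₀ x)⟫) :
    |Real.log (hAvg d α p₀ l x) - Real.log (l (postMean d α p₀ x))|
      ≤ (η₂ / (2 * m)) * ∫ y, ‖y - postMean d α p₀ x‖ ^ 2 * post d α p₀ x y := by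
  have hp₀ (y) : 0 ≤ p₀ y := (hp₀pos y).le
  have hpt : pt d α p₀ x ≠ 0 := (hptpos x).ne'
  have := isProbabilityMeasure_postMeasure hα1.le hp₀ hpt
  rw [hAvg, integral_mul_post hα1.le hp₀ hpt, integral_mul_post hα1.le hp₀ hpt]
  exact stmt9_general hm (memLp_two_postMeasure hα1.le hp₀ hpt hmom2)
    hlmeas.aestronglyMeasurable (postMean_eq_integral_postMeasure hα1.le hp₀ hpt)
    (.of_forall hlm) hlxbar (.of_forall fun y => abs_sub_affine_le_of_eq_quadratic hHnorm (hquad y))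
end
end

section
/- (First error term of Theorem 1: accuracy of the approximated score relative to the idealized score.) Fix x ∈ ℝ^d and ε > 0. Assume log l is continuously differentiable with ‖∇ log l(y)‖ ≤ η for all y; log p_t is twice continuously differentiable with Hessian H_{p_t} that is L-Lipschitz in spectral norm; and the chain-rule identity ∇_x[log l(x̄₀(x))] = (1/√ᾱ) · (I + (1−ᾱ) · H_{p_t}(x)) · ∇(log l)(x̄₀(x)) holds at x. Then ‖s̃(x) − (∇ log p_t(x) + ∇_x[log l(x̄₀(x))])‖ ≤ (1−ᾱ) · L · η² · ε/(2√ᾱ). -/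
open MeasureTheory Real

noncomputable section

/-- The approximated importance score
`s̃(x) = ∇log p_t(x) + (1/√ᾱ)·v(x) + ((1−ᾱ)/(ε√ᾱ))·(∇log p_t(x + ε v(x)) − ∇log p_t(x))`
with `v(x) = ∇(log l)(x̄₀(x))`. -/
def sTilde (d : ℕ) (α ε : ℝ) (p₀ l : EuclideanSpace ℝ (Fin d) → ℝ)
    (x : EuclideanSpace ℝ (Fin d)) : EuclideanSpace ℝ (Fin d) :=
  gradient (fun z => Real.log (pt d α p₀ z)) x
    + (Real.sqrt α)⁻¹ • gradient (fun z => Real.log (l z)) (postMean d α p₀ x)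
    + ((1 - α) / (ε * Real.sqrt α)) •
        (gradient (fun z => Real.log (pt d α p₀ z))
            (x + ε • gradient (fun z => Real.log (l z)) (postMean d α p₀ x))
          - gradient (fun z => Real.log (pt d α p₀ z)) x)

/-!
Substituting the chain-rule identity, the terms `∇ log p_t(x)` and `v / √ᾱ` cancel, and what remains
of the error is `(1 - ᾱ) / √ᾱ` times the error of the forward difference quotient
`ε⁻¹ (∇ log p_t(x + ε v) - ∇ log p_t(x))` as an approximation of `H(x) v`. As `H` is `L`-Lipschitz,
the first-order Taylor remainder of `∇ log p_t` is at most `L ‖ε v‖² / 2`.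
-/

section Taylor

variable {E F : Type*} [NormedAddCommGroup E] [NormedSpace ℝ E]
  [NormedAddCommGroup F] [NormedSpace ℝ F]

theorem norm_sub_sub_smul_le_of_norm_deriv_right_sub_le {f f' : ℝ → F} {a b C : ℝ}
    (hab : a ≤ b) (hf : ContinuousOn f (Set.Icc a b))
    (hf' : ∀ t ∈ Set.Ico a b, HasDerivWithinAt f (f' t) (Set.Ici t) t)
    (bound : ∀ t ∈ Set.Ico a b, ‖f' t - f' a‖ ≤ C * (t - a)) :
    ‖f b - f a - (b - a) • f' a‖ ≤ C * (b - a) ^ 2 / 2 := by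
  let remainder : ℝ → F := fun t => f t - f a - (t - a) • f' a
  have remainder_cont : ContinuousOn remainder (Set.Icc a b) := by fun_prop
  have remainder_deriv : ∀ t ∈ Set.Ico a b,
      HasDerivWithinAt remainder (f' t - f' a) (Set.Ici t) t := by
    intro t ht
    have linear_deriv : HasDerivAt (fun t => (t - a) • f' a) (f' a) t := by
      simpa using ((hasDerivAt_id t).sub_const a).smul_const (f' a)
    exact ((hf' t ht).sub_const (f a)).sub linear_deriv.hasDerivWithinAt
  have majorant_deriv : ∀ t,
      HasDerivAt (fun t => C * (t - a) ^ 2 / 2) (C * (t - a)) t := by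
    intro t
    refine (((((hasDerivAt_id t).sub_const a).pow 2).const_mul C).div_const 2).congr_deriv ?_
    simp only [id_eq]
    ring
  exact image_norm_le_of_norm_deriv_right_le_deriv_boundary remainder_cont remainder_deriv
    (by simp [remainder]) majorant_deriv bound (Set.right_mem_Icc.2 hab)

theorem norm_sub_sub_fderiv_le_of_norm_fderiv_sub_le {g : E → F} {g' : E → E →L[ℝ] F} {x y : E}
    {L : ℝ} (hg : ∀ z ∈ segment ℝ x y, HasFDerivWithinAt g (g' z) (segment ℝ x y) z)
    (hL : ∀ z ∈ segment ℝ x y, ‖g' z - g' x‖ ≤ L * ‖z - x‖) :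
    ‖g y - g x - g' x (y - x)‖ ≤ L * ‖y - x‖ ^ 2 / 2 := by
  let γ : ℝ → E := AffineMap.lineMap x y
  have γ_mem : Set.MapsTo γ (Set.Icc 0 1) (segment ℝ x y) := by
    rw [segment_eq_image_lineMap]
    exact Set.mapsTo_image _ _
  have deriv_along : ∀ t ∈ Set.Icc (0 : ℝ) 1,
      HasDerivWithinAt (g ∘ γ) (g' (γ t) (y - x)) (Set.Icc 0 1) t := fun t ht =>
    (hg _ (γ_mem ht)).comp_hasDerivWithinAt t AffineMap.hasDerivWithinAt_lineMap γ_mem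
  have deriv_bound : ∀ t ∈ Set.Ico (0 : ℝ) 1,
      ‖g' (γ t) (y - x) - g' (γ 0) (y - x)‖ ≤ L * ‖y - x‖ ^ 2 * (t - 0) := by
    intro t ht
    have γ_sub : ‖γ t - x‖ = t * ‖y - x‖ := by
      simp [γ, AffineMap.lineMap_apply_module', norm_smul, abs_of_nonneg ht.1]
    calc ‖g' (γ t) (y - x) - g' (γ 0) (y - x)‖
        = ‖(g' (γ t) - g' x) (y - x)‖ := by simp [γ]
      _ ≤ ‖g' (γ t) - g' x‖ * ‖y - x‖ := ContinuousLinearMap.le_opNorm _ _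
      _ ≤ L * ‖γ t - x‖ * ‖y - x‖ := by
          gcongr
          exact hL _ (γ_mem (Set.Ico_subset_Icc_self ht))
      _ = L * ‖y - x‖ ^ 2 * (t - 0) := by rw [γ_sub]; ring
  simpa [γ] using norm_sub_sub_smul_le_of_norm_deriv_right_sub_le zero_le_one
    (fun t ht => (deriv_along t ht).continuousWithinAt)
    (fun t ht => (deriv_along t (Set.Ico_subset_Icc_self ht)).mono_of_mem_nhdsWithin
      (Icc_mem_nhdsGE_of_mem ht))
    deriv_bound

theorem norm_inv_smul_sub_sub_fderiv_le {g : E → F} {g' : E → E →L[ℝ] F} {x v : E} {ε L : ℝ}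
    (hε : ε ≠ 0)
    (hg : ∀ z ∈ segment ℝ x (x + ε • v),
      HasFDerivWithinAt g (g' z) (segment ℝ x (x + ε • v)) z)
    (hL : ∀ z ∈ segment ℝ x (x + ε • v), ‖g' z - g' x‖ ≤ L * ‖z - x‖) :
    ‖ε⁻¹ • (g (x + ε • v) - g x) - g' x v‖ ≤ L * ‖v‖ ^ 2 * |ε| / 2 := by
  have taylor := norm_sub_sub_fderiv_le_of_norm_fderiv_sub_le hg hL
  rw [add_sub_cancel_left, map_smul, norm_smul, Real.norm_eq_abs] at taylor
  calc ‖ε⁻¹ • (g (x + ε • v) - g x) - g' x v‖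
      = ‖ε⁻¹ • (g (x + ε • v) - g x - ε • g' x v)‖ := by
        rw [smul_sub ε⁻¹ _ (ε • g' x v), inv_smul_smul₀ hε]
    _ = |ε|⁻¹ * ‖g (x + ε • v) - g x - ε • g' x v‖ := by
        rw [norm_smul, norm_inv, Real.norm_eq_abs]
    _ ≤ |ε|⁻¹ * (L * (|ε| * ‖v‖) ^ 2 / 2) := by gcongr
    _ = L * ‖v‖ ^ 2 * |ε| / 2 := by field_simp

end Taylor

theorem nonneg_of_norm_sub_le_mul_norm_sub {E F : Type*} [NormedAddCommGroup E] [Nontrivial E]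
    [SeminormedAddCommGroup F] {f : E → F} {L : ℝ}
    (hf : ∀ z w, ‖f z - f w‖ ≤ L * ‖z - w‖) : 0 ≤ L := by
  obtain ⟨z, w, hzw⟩ := exists_pair_ne E
  exact nonneg_of_mul_nonneg_left ((norm_nonneg _).trans (hf z w)) (norm_sub_pos_iff.2 hzw)

section Score

variable {E : Type*} [NormedAddCommGroup E] [NormedSpace ℝ E]

/-- The score `s` at `x` guided in the direction `v` at noise level `α`, in which the
Hessian-vector product `Ds(x) v` is replaced by a forward difference of `s` with step `ε`. For
`s = ∇ log p_t` and `v = ∇(log l)(x̄₀(x))` it is the approximated importance score `sTilde`. -/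
def forwardDiffScore (α ε : ℝ) (s : E → E) (v x : E) : E :=
  s x + (√α)⁻¹ • v + ((1 - α) / (ε * √α)) • (s (x + ε • v) - s x)

/-- The score `s` at `x` guided in the direction `v` at noise level `α`, with the exact
Hessian-vector product `A v`, where `A` stands for the derivative of `s` at `x`. -/
def hessianScore (α : ℝ) (s : E → E) (A : E →L[ℝ] E) (v x : E) : E :=
  s x + (√α)⁻¹ • (v + (1 - α) • A v)

theorem forwardDiffScore_sub_hessianScore (α ε : ℝ) (s : E → E) (A : E →L[ℝ] E) (v x : E) :
    forwardDiffScore α ε s v x - hessianScore α s A v x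
      = ((1 - α) / √α) • (ε⁻¹ • (s (x + ε • v) - s x) - A v) := by
  unfold forwardDiffScore hessianScore
  module

theorem stmt11_general {α ε η L : ℝ} (hα0 : 0 < α) (hα1 : α ≤ 1) (hε : 0 < ε) (hL : 0 ≤ L)
    {s : E → E} {H : E → E →L[ℝ] E} {x v : E} (hv : ‖v‖ ≤ η)
    (hs : ∀ z ∈ segment ℝ x (x + ε • v),
      HasFDerivWithinAt s (H z) (segment ℝ x (x + ε • v)) z)
    (hLip : ∀ z ∈ segment ℝ x (x + ε • v), ‖H z - H x‖ ≤ L * ‖z - x‖) :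
    ‖forwardDiffScore α ε s v x - hessianScore α s (H x) v x‖
      ≤ (1 - α) * L * η ^ 2 * ε / (2 * √α) := by
  have sqrt_α_pos : 0 < √α := Real.sqrt_pos.2 hα0
  have coeff_nonneg : 0 ≤ (1 - α) / √α := div_nonneg (sub_nonneg.2 hα1) sqrt_α_pos.le
  calc ‖forwardDiffScore α ε s v x - hessianScore α s (H x) v x‖
      = (1 - α) / √α * ‖ε⁻¹ • (s (x + ε • v) - s x) - H x v‖ := by
        rw [forwardDiffScore_sub_hessianScore, norm_smul, Real.norm_of_nonneg coeff_nonneg]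
    _ ≤ (1 - α) / √α * (L * ‖v‖ ^ 2 * |ε| / 2) := by
        gcongr
        exact norm_inv_smul_sub_sub_fderiv_le hε.ne' hs hLip
    _ ≤ (1 - α) / √α * (L * η ^ 2 * |ε| / 2) := by gcongr
    _ = (1 - α) * L * η ^ 2 * ε / (2 * √α) := by
        rw [abs_of_pos hε]
        field_simp

end Score

theorem sTilde_eq_forwardDiffScore (d : ℕ) (α ε : ℝ) (p₀ l : EuclideanSpace ℝ (Fin d) → ℝ)
    (x : EuclideanSpace ℝ (Fin d)) :
    sTilde d α ε p₀ l x
      = forwardDiffScore α ε (gradient fun z => Real.log (pt d α p₀ z))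
          (gradient (fun z => Real.log (l z)) (postMean d α p₀ x)) x :=
  rfl

theorem stmt11 (d : ℕ) (hd : 1 ≤ d) (α : ℝ) (hα0 : 0 < α) (hα1 : α < 1)
    (p₀ l : EuclideanSpace ℝ (Fin d) → ℝ)
    (hp₀pos : ∀ y, 0 < p₀ y) (hp₀int : Integrable p₀) (hp₀one : (∫ y, p₀ y) = 1)
    (hptpos : ∀ x, 0 < pt d α p₀ x)
    (hlpos : ∀ y, 0 < l y)
    (η L : ℝ)
    (hldiff : ∀ y, DifferentiableAt ℝ (fun z => Real.log (l z)) y)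
    (hlgradcont : Continuous fun y => gradient (fun z => Real.log (l z)) y)
    (hη : ∀ y, ‖gradient (fun z => Real.log (l z)) y‖ ≤ η)
    (Hp : EuclideanSpace ℝ (Fin d) →
      EuclideanSpace ℝ (Fin d) →L[ℝ] EuclideanSpace ℝ (Fin d))
    (hHp : ∀ z, HasFDerivAt (fun w => gradient (fun u => Real.log (pt d α p₀ u)) w) (Hp z) z)
    (hHpcont : Continuous Hp)
    (hLip : ∀ z w, ‖Hp z - Hp w‖ ≤ L * ‖z - w‖)
    (x : EuclideanSpace ℝ (Fin d)) (ε : ℝ) (hε : 0 < ε)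
    (hchain : gradient (fun x' => Real.log (l (postMean d α p₀ x'))) x
      = (Real.sqrt α)⁻¹ •
          (gradient (fun z => Real.log (l z)) (postMean d α p₀ x)
            + (1 - α) • Hp x (gradient (fun z => Real.log (l z)) (postMean d α p₀ x)))) :
    ‖sTilde d α ε p₀ l x
        - (gradient (fun z => Real.log (pt d α p₀ z)) x
            + gradient (fun x' => Real.log (l (postMean d α p₀ x'))) x)‖
      ≤ (1 - α) * L * η ^ 2 * ε / (2 * Real.sqrt α) := by
  have : NeZero d := ⟨Nat.one_le_iff_ne_zero.1 hd⟩
  rw [sTilde_eq_forwardDiffScore, hchain]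
  exact stmt11_general hα0 hα1.le hε (nonneg_of_norm_sub_le_mul_norm_sub hLip) (hη _)
    (fun z _ => (hHp z).hasFDerivWithinAt) (fun z _ => hLip z x)
end
end
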